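/- arXiv:1405.0657 — 2 statements merged into one kernel-verified Lean document; each statement's English description precedes it below -/
import Mathlib

section
/- Let M > 2, m > 0, θ > 0, u ∈ ℝ³, and let f(ξ) = Σ_{|α|≤M} f_α ℋ_{θ,α}((ξ−u)/√θ) be a truncated Hermite expansion whose coefficients satisfy f_{e_d} = 0 for d = 1,2,3. Then for each i ∈ {1,2,3}, the heat flux q_i := (m/2) ∫_{ℝ³} |ξ − u|² (ξ_i − u_i) f(ξ) dξ satisfies q_i = 2 f_{3e_i} + Σ_{d=1}^{3} f_{2e_d + e_i}. -/
open MeasureTheory Real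

/-- Probabilists' Hermite polynomial `He n` evaluated at `x`. -/
noncomputable def He (n : ℕ) (x : ℝ) : ℝ :=
  (-1 : ℝ) ^ n * Real.exp (x ^ 2 / 2) *
    iteratedDeriv n (fun y : ℝ => Real.exp (-(y ^ 2) / 2)) x

/-- The basis function `ℋ_{θ,α}` with particle mass `m`. -/
noncomputable def Hbasis (m θ : ℝ) (α : Fin 3 → ℕ) (v : Fin 3 → ℝ) : ℝ :=
  (m * (2 * Real.pi * θ) ^ ((3 : ℝ) / 2) * θ ^ (((∑ d, α d : ℕ) : ℝ) / 2))⁻¹ *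
    ∏ d, (He (α d) (v d) * Real.exp (-(v d) ^ 2 / 2))

/-- The set of multi-indices `α ∈ ℕ³` with `|α| ≤ M`. -/
def multiIndices (M : ℕ) : Finset (Fin 3 → ℕ) :=
  (Fintype.piFinset fun _ : Fin 3 => Finset.range (M + 1)).filter fun α => ∑ d, α d ≤ M

/-- The truncated Hermite expansion of order `M` with parameters `(u, θ)`
and coefficients `c`. -/
noncomputable def truncExp (M : ℕ) (m θ : ℝ) (u : Fin 3 → ℝ)
    (c : (Fin 3 → ℕ) → ℝ) (ξ : Fin 3 → ℝ) : ℝ :=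
  ∑ α ∈ multiIndices M, c α * Hbasis m θ α (fun d => (ξ d - u d) / Real.sqrt θ)


/-- weighted Hermite function -/
noncomputable def gH (n : ℕ) (x : ℝ) : ℝ := He n x * Real.exp (-x ^ 2 / 2)

lemma He_eq (n : ℕ) (x : ℝ) : He n x = Polynomial.aeval x (Polynomial.hermite n) := by
  rw [Polynomial.hermite_eq_deriv_gaussian', He, iteratedDeriv_eq_iterate]
  have : (fun y : ℝ => Real.exp (-(y ^ 2) / 2)) = fun y => Real.exp (-(y ^ 2 / 2)) := by
    funext y; rw [neg_div]
  rw [this]; ring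

lemma gH_deriv (n : ℕ) (x : ℝ) : HasDerivAt (gH n) (-(gH (n + 1) x)) x := by
  have h0 : gH n = fun y => Polynomial.aeval y (Polynomial.hermite n) * Real.exp (-y ^ 2 / 2) := by
    funext y; rw [gH, He_eq]
  have h1 := Polynomial.hasDerivAt_aeval (Polynomial.hermite n) x
  have h2 : HasDerivAt (fun y : ℝ => Real.exp (-y ^ 2 / 2)) (Real.exp (-x ^ 2 / 2) * (-x)) x := by
    have h3 : HasDerivAt (fun y : ℝ => -y ^ 2 / 2) (-x) x := by
      refine ((hasDerivAt_pow 2 x).fun_neg.div_const 2).congr_deriv ?_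
      push_cast; ring
    exact h3.exp
  rw [h0]
  refine (h1.fun_mul h2).congr_deriv ?_
  rw [gH, He_eq, Polynomial.hermite_succ]
  simp only [map_sub, map_mul, Polynomial.aeval_X]
  ring

lemma gauss_pow_int (k : ℕ) : Integrable (fun x : ℝ => x ^ k * Real.exp (-x ^ 2 / 2)) := by
  have := integrable_rpow_mul_exp_neg_mul_sq (b := 1 / 2) (by norm_num) (s := (k : ℝ))
    (by have : (0 : ℝ) ≤ k := Nat.cast_nonneg k
        linarith)
  refine this.congr (Filter.Eventually.of_forall fun x => ?_)
  simp only [Real.rpow_natCast]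
  congr 2; ring

lemma gH_int (k n : ℕ) : Integrable (fun x : ℝ => x ^ k * gH n x) := by
  have : (fun x : ℝ => x ^ k * gH n x) = fun x => ∑ j ∈ Finset.range ((Polynomial.hermite n).natDegree + 1),
      ((Polynomial.hermite n).coeff j : ℝ) * (x ^ (k + j) * Real.exp (-x ^ 2 / 2)) := by
    funext x
    rw [gH, He_eq, Polynomial.aeval_eq_sum_range, Finset.sum_mul, Finset.mul_sum]
    refine Finset.sum_congr rfl fun j _ => ?_
    rw [zsmul_eq_mul, pow_add]; ring
  rw [this]
  exact integrable_finsetSum _ fun j _ => (gauss_pow_int _).const_mul _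

/-- moments -/
noncomputable def JH (k n : ℕ) : ℝ := ∫ x : ℝ, x ^ k * gH n x

lemma JH_succ (k n : ℕ) : JH k (n + 1) = k * JH (k - 1) n := by
  have hd : ∀ x : ℝ, HasDerivAt (fun x : ℝ => x ^ k * gH n x)
      ((k : ℝ) * (x ^ (k - 1) * gH n x) - x ^ k * gH (n + 1) x) x := by
    intro x
    refine ((hasDerivAt_pow k x).fun_mul (gH_deriv n x)).congr_deriv ?_
    ring
  have h := integral_eq_zero_of_hasDerivAt_of_integrable hd
    (((gH_int (k - 1) n).const_mul _).sub (gH_int k (n + 1))) (gH_int k n)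
  rw [integral_sub ((gH_int (k - 1) n).const_mul _) (gH_int k (n + 1)),
    integral_const_mul] at h
  unfold JH; linarith

lemma JH_zero_succ (k : ℕ) : JH (k + 1) 0 = JH k 1 := by
  unfold JH
  congr 1; funext x
  simp [gH, He_eq, pow_succ, mul_assoc]

lemma JH_zero : JH 0 0 = √(2 * π) := by
  unfold JH
  have := integral_gaussian (1 / 2)
  rw [show π / (1 / 2) = 2 * π by ring] at this
  rw [← this]
  congr 1; funext x
  simp [gH, He_eq]; ring

lemma JH_one_zero : JH 1 0 = 0 := by rw [JH_zero_succ, JH_succ]; simp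
lemma JH_three_zero : JH 3 0 = 0 := by rw [JH_zero_succ, JH_succ]; simp [JH_one_zero]

lemma JH_self (n : ℕ) : JH n n = n.factorial * √(2 * π) := by
  induction n with
  | zero => simp [JH_zero]
  | succ n ih => rw [JH_succ, Nat.add_sub_cancel, ih, Nat.factorial_succ]; push_cast; ring

lemma JH_0 {n : ℕ} (h : JH 0 n ≠ 0) : n = 0 := by
  rcases n with _ | n
  · rfl
  · exact absurd (by rw [JH_succ]; simp) h

lemma JH_1 {n : ℕ} (h : JH 1 n ≠ 0) : n = 1 := by
  rcases n with _ | n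
  · exact absurd JH_one_zero h
  · rw [JH_succ] at h
    rw [JH_0 (right_ne_zero_of_mul h)]

lemma JH_2 {n : ℕ} (h : JH 2 n ≠ 0) : n = 0 ∨ n = 2 := by
  rcases n with _ | n
  · left; rfl
  · rw [JH_succ] at h
    rw [JH_1 (right_ne_zero_of_mul h)]; simp

lemma JH_3 {n : ℕ} (h : JH 3 n ≠ 0) : n = 1 ∨ n = 3 := by
  rcases n with _ | n
  · exact absurd JH_three_zero h
  · rw [JH_succ] at h
    rcases JH_2 (right_ne_zero_of_mul h) with h | h <;> simp [h]

lemma prod_zero (i d : Fin 3) (α : Fin 3 → ℕ) (h1 : α ≠ Pi.single i 1)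
    (h2 : α ≠ Pi.single d 2 + Pi.single i 1) :
    ∏ e, JH ((Pi.single d 2 + Pi.single i 1 : Fin 3 → ℕ) e) (α e) = 0 := by
  by_contra h
  rw [← ne_eq, Finset.prod_ne_zero_iff] at h
  have key : ∀ e, (α e = (Pi.single d 2 + Pi.single i 1 : Fin 3 → ℕ) e) ∨
      (e = d ∧ α e + 2 = (Pi.single d 2 + Pi.single i 1 : Fin 3 → ℕ) e) := by
    intro e
    have he := h e (Finset.mem_univ e)
    by_cases hd : e = d <;> by_cases hi : e = i <;>
      simp only [Pi.add_apply, Pi.single_apply, hd, hi, if_true, if_false] at he ⊢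
    · subst hd; subst hi
      simp only [if_true] at he ⊢
      rcases JH_3 he with h | h <;> simp [h]
    · subst hd
      simp only [hi, if_false] at he ⊢
      rcases JH_2 he with h | h <;> simp [h]
    · subst hi
      simp only [hd, if_false] at he ⊢
      simp [JH_1 he]
    · simp [JH_0 he]
  by_cases hd : α d = (Pi.single d 2 + Pi.single i 1 : Fin 3 → ℕ) d
  · apply h2; funext e
    rcases key e with h | ⟨h, _⟩
    · exact h
    · rw [h]; exact hd
  · apply h1; funext e
    rcases key e with h | ⟨h, h'⟩
    · have : e ≠ d := by rintro rfl; exact hd h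
      simpa [Pi.single_apply, this] using h
    · subst h
      simp only [Pi.add_apply, Pi.single_eq_same] at h'
      omega

lemma prod_self (i d : Fin 3) :
    ∏ e, JH ((Pi.single d 2 + Pi.single i 1 : Fin 3 → ℕ) e)
      ((Pi.single d 2 + Pi.single i 1 : Fin 3 → ℕ) e) =
    (if d = i then 6 else 2) * √(2 * π) ^ 3 := by
  simp only [JH_self, Fin.prod_univ_three]
  fin_cases i <;> fin_cases d <;> simp [Pi.single_apply, Nat.factorial] <;> ring

lemma mono_eq (i d : Fin 3) (α : Fin 3 → ℕ) (v : Fin 3 → ℝ) :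
    v d ^ 2 * v i * ∏ e, gH (α e) (v e) =
      ∏ e, (v e ^ ((Pi.single d 2 + Pi.single i 1 : Fin 3 → ℕ) e) * gH (α e) (v e)) := by
  rw [Finset.prod_mul_distrib]
  congr 1
  simp only [Pi.add_apply, pow_add, Finset.prod_mul_distrib, Pi.single_apply, pow_ite,
    pow_zero, Finset.prod_ite_eq', Finset.mem_univ, if_true, pow_one]

lemma mono_int (β α : Fin 3 → ℕ) :
    Integrable (fun v : Fin 3 → ℝ => ∏ e, (v e ^ (β e) * gH (α e) (v e))) :=
  Integrable.fintype_prod (f := fun e x => x ^ (β e) * gH (α e) x) fun e => gH_int _ _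

lemma mono_integral (β α : Fin 3 → ℕ) :
    ∫ v : Fin 3 → ℝ, ∏ e, (v e ^ (β e) * gH (α e) (v e)) = ∏ e, JH (β e) (α e) :=
  integral_fintype_prod_volume_eq_prod (fun e x => x ^ (β e) * gH (α e) x)

/-- normalisation constant -/
noncomputable def KH (m θ : ℝ) (α : Fin 3 → ℕ) : ℝ :=
  (m * (2 * Real.pi * θ) ^ ((3 : ℝ) / 2) * θ ^ (((∑ d, α d : ℕ) : ℝ) / 2))⁻¹

lemma KH_eq (m θ : ℝ) (hm : 0 < m) (hθ : 0 < θ) (i d : Fin 3) :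
    m / 2 * (√θ ^ 3 * (√θ ^ 3 * (KH m θ (Pi.single d 2 + Pi.single i 1) * √(2 * π) ^ 3))) = 1 / 2 := by
  have hs : (∑ e, (Pi.single d 2 + Pi.single i 1 : Fin 3 → ℕ) e) = 3 := by
    simp [Finset.sum_add_distrib]
  have hp : ∀ x : ℝ, 0 < x → x ^ ((3 : ℝ) / 2) = √x ^ 3 := by
    intro x hx
    rw [Real.sqrt_eq_rpow, ← Real.rpow_natCast, ← Real.rpow_mul hx.le]; norm_num
  have hpi := Real.pi_pos
  rw [KH, hs, Nat.cast_ofNat, hp _ (by positivity), hp _ hθ, Real.sqrt_mul (by positivity)]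
  have h1 : √θ ≠ 0 := by positivity
  have h2 : √(2 * π) ≠ 0 := by positivity
  field_simp

theorem stmt_4 (M : ℕ) (hM : 2 < M) (m θ : ℝ) (hm : 0 < m) (hθ : 0 < θ)
    (u : Fin 3 → ℝ) (c : (Fin 3 → ℕ) → ℝ)
    (hc : ∀ d : Fin 3, c (Pi.single d 1) = 0) (i : Fin 3) :
    m / 2 * ∫ ξ : Fin 3 → ℝ,
        (∑ d, (ξ d - u d) ^ 2) * (ξ i - u i) * truncExp M m θ u c ξ =
      2 * c (Pi.single i 3) + ∑ d, c (Pi.single d 2 + Pi.single i 1) := by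
  have hs : 0 < √θ := Real.sqrt_pos.2 hθ
  let F : (Fin 3 → ℝ) → ℝ := fun v => √θ ^ 3 * ∑ d, ∑ α ∈ multiIndices M, c α * KH m θ α *
    ∏ e, (v e ^ ((Pi.single d 2 + Pi.single i 1 : Fin 3 → ℕ) e) * gH (α e) (v e))
  have h1 : ∀ ξ : Fin 3 → ℝ, (∑ d, (ξ d - u d) ^ 2) * (ξ i - u i) * truncExp M m θ u c ξ =
      F ((√θ)⁻¹ • (ξ - u)) := by
    intro ξ
    simp only [F, ← mono_eq]
    simp only [truncExp, Finset.sum_mul, Finset.mul_sum]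
    rw [Finset.sum_comm]
    refine Finset.sum_congr rfl fun d _ => ?_
    refine Finset.sum_congr rfl fun α _ => ?_
    simp only [Hbasis, KH, gH, Pi.smul_apply, Pi.sub_apply, smul_eq_mul, div_eq_inv_mul (_ - _)]
    field_simp
  have h2 : ∫ ξ : Fin 3 → ℝ, (∑ d, (ξ d - u d) ^ 2) * (ξ i - u i) * truncExp M m θ u c ξ =
      √θ ^ 3 * ∫ v, F v := by
    simp only [h1]
    rw [integral_sub_right_eq_self (fun ξ => F ((√θ)⁻¹ • ξ)) u,
      Measure.integral_comp_inv_smul]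
    simp [abs_of_pos hs]
  have h3 : ∫ v, F v = √θ ^ 3 * ∑ d, c (Pi.single d 2 + Pi.single i 1) *
      KH m θ (Pi.single d 2 + Pi.single i 1) * ((if d = i then 6 else 2) * √(2 * π) ^ 3) := by
    simp only [F]
    rw [integral_const_mul, integral_finsetSum _ fun d _ => integrable_finsetSum _ fun α _ =>
      (mono_int _ _).const_mul _]
    congr 1
    refine Finset.sum_congr rfl fun d _ => ?_
    rw [integral_finsetSum _ fun α _ => (mono_int _ _).const_mul _]
    simp only [integral_const_mul, mono_integral]
    rw [Finset.sum_eq_single (Pi.single d 2 + Pi.single i 1), prod_self]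
    · intro α _ hα
      by_cases h : α = Pi.single i 1
      · rw [h, hc]; simp
      · rw [prod_zero i d α h hα, mul_zero]
    · intro h
      exfalso; apply h
      have hle : ∀ e, (Pi.single d 2 + Pi.single i 1 : Fin 3 → ℕ) e ≤ 3 := by
        intro e
        simp only [Pi.add_apply, Pi.single_apply]
        split_ifs <;> omega
      have hs : (∑ e, (Pi.single d 2 + Pi.single i 1 : Fin 3 → ℕ) e) = 3 := by
        simp [Finset.sum_add_distrib]
      simp only [multiIndices, Finset.mem_filter, Fintype.mem_piFinset, Finset.mem_range]
      exact ⟨fun e => by have := hle e; omega, by rw [hs]; omega⟩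
  rw [h2, h3]
  simp only [Finset.mul_sum]
  have h4 : ∀ d : Fin 3, m / 2 * (√θ ^ 3 * (√θ ^ 3 * (c (Pi.single d 2 + Pi.single i 1) *
      KH m θ (Pi.single d 2 + Pi.single i 1) * ((if d = i then 6 else 2) * √(2 * π) ^ 3)))) =
      (if d = i then 2 * c (Pi.single i 3) else 0) + c (Pi.single d 2 + Pi.single i 1) := by
    intro d
    have hk := KH_eq m θ hm hθ i d
    by_cases h : d = i
    · subst h
      have h5 : (Pi.single d 3 : Fin 3 → ℕ) = Pi.single d 2 + Pi.single d 1 := by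
        rw [← Pi.single_add]
      simp only [if_true, h5]
      linear_combination 6 * c (Pi.single d 2 + Pi.single d 1) * hk
    · simp only [h, if_false]
      linear_combination 2 * c (Pi.single d 2 + Pi.single i 1) * hk
  simp only [h4, Finset.sum_add_distrib, Finset.sum_ite_eq', Finset.mem_univ, if_true]
end

section
/- Let m > 0, ρ > 0, θ > 0, u ∈ ℝ³, and let Λ be a symmetric positive-definite real 3×3 matrix. Define the anisotropic Gaussian g(ξ) := ρ / ( m √(det(2πΛ)) ) · exp( −(1/2) (ξ − u)ᵀ Λ⁻¹ (ξ − u) ) on ℝ³, and for each multi-index α ∈ ℕ³ define its Hermite coefficient g_α := ( m θ^{|α|/2} / α! ) ∫_{ℝ³} g(ξ) ∏_{d=1}^{3} He_{α_d}((ξ_d − u_d)/√θ) dξ, with the convention g_β := 0 whenever β has a negative component. Then g_0 = ρ, g_α = 0 for every α with |α| = 1, and for every α with |α| ≥ 2 and every i with α_i ≥ 1, α_i g_α = Σ_{j=1}^{3} ( Λ_{ij} − θ δ_{ij} ) g_{α − e_i − e_j}. -/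
open MeasureTheory Real

open Matrix in
/-- The anisotropic Gaussian `f^{ES}` with density `ρ`, velocity `u` and matrix `Λ`. -/
noncomputable def esGauss (m ρ : ℝ) (u : Fin 3 → ℝ) (Λ : Matrix (Fin 3) (Fin 3) ℝ)
    (ξ : Fin 3 → ℝ) : ℝ :=
  ρ / (m * Real.sqrt (((2 * Real.pi) • Λ).det)) *
    Real.exp (-(1 / 2) * ((fun d => ξ d - u d) ⬝ᵥ Λ⁻¹.mulVec fun d => ξ d - u d))

/-- The Hermite coefficient `g_β` of the anisotropic Gaussian, indexed by `β ∈ ℤ³`,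
with the convention that `g_β = 0` whenever `β` has a negative component. -/
noncomputable def gcoef (m ρ θ : ℝ) (u : Fin 3 → ℝ) (Λ : Matrix (Fin 3) (Fin 3) ℝ)
    (β : Fin 3 → ℤ) : ℝ :=
  if ∀ d, 0 ≤ β d then
    m * θ ^ ((((∑ d, β d) : ℤ) : ℝ) / 2) / (∏ d, Nat.factorial (β d).toNat) *
      ∫ ξ : Fin 3 → ℝ,
        esGauss m ρ u Λ ξ * ∏ d, He ((β d).toNat) ((ξ d - u d) / Real.sqrt θ)
  else 0

section aux
open Polynomial Matrix

noncomputable def hpoly (s : ℝ) (n : ℕ) : ℝ[X] :=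
  ((hermite n).map (Int.castRingHom ℝ)).comp (C s⁻¹ * X)

lemma He_eq_s17 (n : ℕ) (x : ℝ) : He n x = ((hermite n).map (Int.castRingHom ℝ)).eval x := by
  have h := hermite_eq_deriv_gaussian' n x
  rw [aeval_def, ← eval_map] at h
  have e : (Int.castRingHom ℝ) = algebraMap ℤ ℝ := rfl
  rw [e, h, He, iteratedDeriv_eq_iterate]
  simp only [neg_div]
  ring

lemma He_hpoly (s : ℝ) (n : ℕ) (x : ℝ) : He n (x / s) = (hpoly s n).eval x := by
  rw [He_eq_s17, hpoly, eval_comp]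
  congr 1
  simp [div_eq_inv_mul]

lemma deriv_hermite (n : ℕ) :
    derivative (hermite (n+1)) = ((n+1 : ℕ) : ℤ[X]) * hermite n := by
  induction n with
  | zero => simp
  | succ n ih =>
    have h2 := hermite_succ n
    rw [hermite_succ (n+1), derivative_sub, derivative_mul, ih]
    simp only [derivative_mul, derivative_X, derivative_natCast]
    push_cast
    rw [h2]
    ring

lemma hpoly_succ {s : ℝ} (hs : s ≠ 0) (n : ℕ) :
    hpoly s (n+1) = C s⁻¹ * X * hpoly s n - C s * derivative (hpoly s n) := by
  have h : C s * C s⁻¹ = (1 : ℝ[X]) := by rw [← C_mul, mul_inv_cancel₀ hs, C_1]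
  simp only [hpoly, hermite_succ, derivative_comp, Polynomial.map_sub, Polynomial.map_mul,
    sub_comp, mul_comp, map_X, X_comp, derivative_map, derivative_mul, derivative_C, derivative_X]
  linear_combination (-(((derivative (hermite n)).map (Int.castRingHom ℝ)).comp (C s⁻¹ * X))) * (-h)

lemma deriv_hpoly (s : ℝ) (n : ℕ) :
    derivative (hpoly s n) = C ((n : ℝ) * s⁻¹) * hpoly s (n - 1) := by
  cases n with
  | zero => simp [hpoly]
  | succ n =>
    simp only [hpoly, derivative_comp, derivative_map, deriv_hermite, Polynomial.map_mul,
      Polynomial.map_natCast, mul_comp, natCast_comp, derivative_mul, derivative_C, derivative_X,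
      C_mul, Nat.add_sub_cancel, map_natCast]
    ring

lemma int1 {c : ℝ} (hc : 0 < c) (p : ℝ[X]) :
    Integrable fun x : ℝ => p.eval x * Real.exp (-c * x ^ 2) := by
  induction p using Polynomial.induction_on' with
  | add p q hp hq =>
    simp only [eval_add, add_mul]
    exact hp.add hq
  | monomial n a =>
    have := (integrable_rpow_mul_exp_neg_mul_sq hc (s := n)
      (by have : (0:ℝ) ≤ n := n.cast_nonneg
          linarith)).const_mul a
    simpa [mul_assoc] using this

lemma int3 {A : Matrix (Fin 3) (Fin 3) ℝ} {c : ℝ} (hc : 0 < c)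
    (hA : ∀ x : Fin 3 → ℝ, c * ∑ d, x d ^ 2 ≤ x ⬝ᵥ A.mulVec x) (p : Fin 3 → ℝ[X]) :
    Integrable fun x : Fin 3 → ℝ =>
      Real.exp (-(1 / 2) * (x ⬝ᵥ A.mulVec x)) * ∏ d, (p d).eval (x d) := by
  have h : Integrable (fun x : Fin 3 → ℝ =>
      ∏ d, (p d).eval (x d) * Real.exp (-(c/2) * (x d) ^ 2)) :=
    Integrable.fintype_prod (f := fun d y => (p d).eval y * Real.exp (-(c/2) * y ^ 2))
      (fun d => int1 (by positivity) (p d))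
  refine h.mono ?_ ?_
  · apply Continuous.aestronglyMeasurable
    have : Continuous fun x : Fin 3 → ℝ => x ⬝ᵥ A.mulVec x := by
      simp only [dotProduct, mulVec]; fun_prop
    have h2 : ∀ d, Continuous fun x : Fin 3 → ℝ => (p d).eval (x d) := fun d =>
      (p d).continuous.comp (continuous_apply d)
    fun_prop
  · refine Filter.Eventually.of_forall fun x => ?_
    rw [Finset.prod_mul_distrib, ← Real.exp_sum, norm_mul, norm_mul, mul_comm]
    gcongr
    rw [Real.norm_eq_abs, Real.norm_eq_abs, Real.abs_exp, Real.abs_exp, ← Finset.mul_sum]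
    have := hA x
    exact Real.exp_le_exp.2 (by linarith)

lemma factor {Λ : Matrix (Fin 3) (Fin 3) ℝ} (hpos : Λ.PosDef) :
    ∃ B : Matrix (Fin 3) (Fin 3) ℝ, IsUnit B ∧ Λ⁻¹ = Bᵀ * B := by
  classical
  open scoped MatrixOrder Matrix.Norms.L2Operator in
  obtain ⟨y, hy, h⟩ := CStarAlgebra.isStrictlyPositive_iff_eq_star_mul_self.mp
        hpos.inv.isStrictlyPositive
  exact ⟨y, hy, by rw [h]; rfl⟩

lemma quad_eq (B : Matrix (Fin 3) (Fin 3) ℝ) (x : Fin 3 → ℝ) :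
    x ⬝ᵥ (Bᵀ * B).mulVec x = ∑ d, (B.mulVec x d) ^ 2 := by
  rw [← mulVec_mulVec, dotProduct_mulVec, vecMul_transpose]
  simp [dotProduct, pow_two]

lemma coercive {Λ : Matrix (Fin 3) (Fin 3) ℝ} (hpos : Λ.PosDef) :
    ∃ c : ℝ, 0 < c ∧ ∀ x : Fin 3 → ℝ, c * ∑ d, x d ^ 2 ≤ x ⬝ᵥ Λ⁻¹.mulVec x := by
  obtain ⟨B, hB, h⟩ := factor hpos
  have hdet : IsUnit B.det := (Matrix.isUnit_iff_isUnit_det B).1 hB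
  set K : ℝ := ∑ d, ∑ j, (B⁻¹ d j) ^ 2 with hK
  have hK0 : 0 ≤ K := by positivity
  refine ⟨1 / (K + 1), by positivity, fun x => ?_⟩
  rw [h, quad_eq]
  have h1 : ∑ d, x d ^ 2 ≤ K * ∑ d, (B.mulVec x d) ^ 2 := by
    rw [hK, Finset.sum_mul]
    refine Finset.sum_le_sum fun d _ => ?_
    have hx : x d = ∑ j, B⁻¹ d j * B.mulVec x j := by
      have : B⁻¹.mulVec (B.mulVec x) = x := by
        rw [mulVec_mulVec, Matrix.nonsing_inv_mul _ hdet, one_mulVec]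
      conv_lhs => rw [← this]
      rfl
    conv_lhs => rw [hx]
    exact Finset.sum_mul_sq_le_sq_mul_sq _ _ _
  have h2 : 0 ≤ ∑ d, (B.mulVec x d) ^ 2 := by positivity
  rw [one_div, inv_mul_le_iff₀ (by positivity)]
  linarith

lemma norm_int {Λ : Matrix (Fin 3) (Fin 3) ℝ} (hpos : Λ.PosDef) :
    ∫ x : Fin 3 → ℝ, Real.exp (-(1 / 2) * (x ⬝ᵥ Λ⁻¹.mulVec x)) =
      Real.sqrt (((2 * Real.pi) • Λ).det) := by
  obtain ⟨B, hB, h⟩ := factor hpos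
  have hdet : IsUnit B.det := (Matrix.isUnit_iff_isUnit_det B).1 hB
  have hd0 : B.det ≠ 0 := hdet.ne_zero
  have hm := Real.map_matrix_volume_pi_eq_smul_volume_pi hd0
  have hG : ∫ y : Fin 3 → ℝ, Real.exp (-(1/2) * ∑ d, y d ^ 2) = Real.sqrt (2 * Real.pi) ^ 3 := by
    have : ∀ y : Fin 3 → ℝ, Real.exp (-(1/2) * ∑ d, y d ^ 2)
        = ∏ d, Real.exp (-(1/2) * (y d)^2) := fun y => by
      rw [← Real.exp_sum, Finset.mul_sum]
    simp_rw [this]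
    rw [integral_fintype_prod_volume_eq_pow (fun y : ℝ => Real.exp (-(1/2) * y^2)),
      integral_gaussian]
    simp [mul_comm]
  have h1 : ∫ x : Fin 3 → ℝ, Real.exp (-(1 / 2) * (x ⬝ᵥ Λ⁻¹.mulVec x))
      = |(B.det)⁻¹| * Real.sqrt (2 * Real.pi) ^ 3 := by
    simp_rw [h, quad_eq]
    have hc : Continuous fun y : Fin 3 → ℝ => Real.exp (-(1/2) * ∑ d, y d ^ 2) := by fun_prop
    have := integral_map (μ := (volume : Measure (Fin 3 → ℝ))) (φ := Matrix.toLin' B)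
      (LinearMap.continuous_of_finiteDimensional _).aemeasurable
      (hc.aestronglyMeasurable)
    rw [hm, integral_smul_measure, hG] at this
    simp only [toLin'_apply] at this
    rw [← this, ENNReal.toReal_ofReal (abs_nonneg _), smul_eq_mul]
  have hL : Λ.det = (B.det⁻¹)^2 := by
    have := congrArg Matrix.det h
    rw [det_nonsing_inv, det_mul, det_transpose, Ring.inverse_eq_inv'] at this
    rw [← inv_inv Λ.det, this]; ring
  rw [h1, det_smul, hL]
  have hp : (0:ℝ) ≤ 2 * Real.pi := by positivity
  symm
  rw [Real.sqrt_eq_iff_mul_self_eq (by positivity) (by positivity)]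
  have hs := Real.sq_sqrt hp
  have ha := sq_abs (B.det⁻¹)
  have e : (|B.det⁻¹| * Real.sqrt (2 * Real.pi) ^ 3) * (|B.det⁻¹| * Real.sqrt (2 * Real.pi) ^ 3)
      = |B.det⁻¹|^2 * (Real.sqrt (2 * Real.pi)^2)^3 := by ring
  rw [hs, ha] at e
  rw [Fintype.card_fin]
  linarith [e]

lemma lineG {Λ : Matrix (Fin 3) (Fin 3) ℝ} (hsymm : Λ.IsSymm) (hdet : IsUnit Λ.det)
    (i : Fin 3) (x : Fin 3 → ℝ) :
    HasLineDerivAt ℝ (fun x : Fin 3 → ℝ => Real.exp (-(1 / 2) * (x ⬝ᵥ Λ⁻¹.mulVec x)))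
      (-(Real.exp (-(1 / 2) * (x ⬝ᵥ Λ⁻¹.mulVec x)) * x i)) x (Λ i) := by
  have hv : Λ⁻¹.mulVec (Λ i) = Pi.single i 1 := by
    have : Λ i = Λ.mulVec (Pi.single i 1) := by
      ext j
      simp [hsymm.apply]
    rw [this, mulVec_mulVec, Matrix.nonsing_inv_mul _ hdet, one_mulVec]
  have hsi : Λ⁻¹ᵀ = Λ⁻¹ := by rw [transpose_nonsing_inv, hsymm]
  have hq : ∀ t : ℝ, (x + t • Λ i) ⬝ᵥ Λ⁻¹.mulVec (x + t • Λ i) =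
      x ⬝ᵥ Λ⁻¹.mulVec x + 2 * t * x i + t^2 * Λ i i := by
    intro t
    have h1 : Λ i ⬝ᵥ Λ⁻¹.mulVec x = x i := by
      rw [dotProduct_mulVec, ← mulVec_transpose, hsi, hv]; simp
    simp only [mulVec_add, mulVec_smul, hv, add_dotProduct, dotProduct_add, smul_dotProduct,
      dotProduct_smul, h1, dotProduct_single, smul_eq_mul,
      Pi.add_apply, Pi.smul_apply]
    ring
  unfold HasLineDerivAt
  simp_rw [hq]
  have h0 : HasDerivAt (fun t : ℝ => -(1/2) * (x ⬝ᵥ Λ⁻¹.mulVec x + 2 * t * x i + t^2 * Λ i i))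
      (-(1/2) * (2 * x i)) 0 := by
    have a := (((hasDerivAt_id (0:ℝ)).const_mul 2).mul_const (x i)).const_add (x ⬝ᵥ Λ⁻¹.mulVec x)
    have b := ((hasDerivAt_id (0:ℝ)).pow 2).mul_const (Λ i i)
    convert! (a.add b).const_mul (-(1/2)) using 1
    simp
  convert! h0.exp using 1
  simp

noncomputable def dp (p : Fin 3 → ℝ[X]) (j : Fin 3) : Fin 3 → ℝ[X] :=
  Function.update p j (derivative (p j))

lemma lineP (p : Fin 3 → ℝ[X]) (v x : Fin 3 → ℝ) :
    HasLineDerivAt ℝ (fun x : Fin 3 → ℝ => ∏ d, (p d).eval (x d))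
      (∑ j, v j * ∏ d, (dp p j d).eval (x d)) x v := by
  unfold HasLineDerivAt
  have h : ∀ d, HasDerivAt (fun t : ℝ => (p d).eval ((x + t • v) d))
      ((derivative (p d)).eval (x d) * v d) 0 := by
    intro d
    have a : HasDerivAt (fun t : ℝ => x d + t * v d) (v d) 0 := by
      simpa using ((hasDerivAt_id (0:ℝ)).mul_const (v d)).const_add (x d)
    have b := (p d).hasDerivAt (x d + 0 * v d)
    have c := HasDerivAt.comp (0:ℝ) b a
    simpa [Function.comp_def] using c
  have := ((h 0).mul (h 1)).mul (h 2)
  simp only [Fin.prod_univ_three]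
  convert! this using 1
  simp [Fin.sum_univ_three, dp, Function.update]
  ring

lemma ibp {Λ : Matrix (Fin 3) (Fin 3) ℝ} (hsymm : Λ.IsSymm) (hpos : Λ.PosDef)
    (i : Fin 3) (p : Fin 3 → ℝ[X]) :
    ∫ x : Fin 3 → ℝ, Real.exp (-(1 / 2) * (x ⬝ᵥ Λ⁻¹.mulVec x)) *
        ∏ d, (Function.update p i (X * p i) d).eval (x d) =
      ∑ j, Λ i j * ∫ x : Fin 3 → ℝ, Real.exp (-(1 / 2) * (x ⬝ᵥ Λ⁻¹.mulVec x)) *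
        ∏ d, (dp p j d).eval (x d) := by
  obtain ⟨c, hc, hA⟩ := coercive hpos
  have hI := int3 hc hA
  have hX : ∀ x : Fin 3 → ℝ, ∏ d, (Function.update p i (X * p i) d).eval (x d) =
      x i * ∏ d, (p d).eval (x d) := by
    intro x
    fin_cases i <;> simp [Fin.prod_univ_three, Function.update] <;> ring
  have hD : ∀ x : Fin 3 → ℝ, Real.exp (-(1 / 2) * (x ⬝ᵥ Λ⁻¹.mulVec x)) *
      ∑ j, Λ i j * ∏ d, (dp p j d).eval (x d) = ∑ j, Λ i j *
        (Real.exp (-(1 / 2) * (x ⬝ᵥ Λ⁻¹.mulVec x)) * ∏ d, (dp p j d).eval (x d)) := by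
    intro x
    rw [Finset.mul_sum]
    exact Finset.sum_congr rfl fun j _ => by ring
  have hIj : ∀ j, Integrable fun x : Fin 3 → ℝ => Λ i j *
        (Real.exp (-(1 / 2) * (x ⬝ᵥ Λ⁻¹.mulVec x)) * ∏ d, (dp p j d).eval (x d)) :=
    fun j => (hI (dp p j)).const_mul _
  have key := integral_bilinear_hasLineDerivAt_right_eq_neg_left_of_integrable
    (μ := (volume : Measure (Fin 3 → ℝ))) (B := ContinuousLinearMap.mul ℝ ℝ)
    (f := fun x : Fin 3 → ℝ => Real.exp (-(1 / 2) * (x ⬝ᵥ Λ⁻¹.mulVec x)))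
    (f' := fun x => -(Real.exp (-(1 / 2) * (x ⬝ᵥ Λ⁻¹.mulVec x)) * x i))
    (g := fun x : Fin 3 → ℝ => ∏ d, (p d).eval (x d))
    (g' := fun x => ∑ j, Λ i j * ∏ d, (dp p j d).eval (x d)) (v := Λ i)
    (by
      have := (hI (Function.update p i (X * p i))).neg
      refine this.congr (Filter.Eventually.of_forall fun x => ?_)
      simp only [Pi.neg_apply, hX, ContinuousLinearMap.mul_apply']
      ring)
    (by
      simp only [ContinuousLinearMap.mul_apply', hD]
      exact integrable_finsetSum _ fun j _ => hIj j)
    (by simpa only [ContinuousLinearMap.mul_apply'] using hI p)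
    (fun x _ => lineG hsymm ((Matrix.isUnit_iff_isUnit_det _).1 hpos.isUnit) i x)
    (fun x _ => lineP p (Λ i) x)
  simp only [ContinuousLinearMap.mul_apply', hD] at key
  rw [integral_finsetSum _ fun j _ => hIj j] at key
  simp only [integral_const_mul] at key
  rw [key, ← integral_neg]
  congr 1
  ext x
  rw [hX]
  ring


noncomputable def Jint (Λ : Matrix (Fin 3) (Fin 3) ℝ) (s : ℝ) (β : Fin 3 → ℕ) : ℝ :=
  ∫ x : Fin 3 → ℝ, Real.exp (-(1 / 2) * (x ⬝ᵥ Λ⁻¹.mulVec x)) *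
    ∏ d, (hpoly s (β d)).eval (x d)

lemma Jrec {Λ : Matrix (Fin 3) (Fin 3) ℝ} (hsymm : Λ.IsSymm) (hpos : Λ.PosDef)
    {s θ : ℝ} (hs : 0 < s) (hθ : s ^ 2 = θ) (γ : Fin 3 → ℕ) (i : Fin 3) :
    Jint Λ s (Function.update γ i (γ i + 1)) =
      ∑ j, (Λ i j - θ * if i = j then (1 : ℝ) else 0) *
        ((γ j : ℝ) / θ * Jint Λ s (Function.update γ j (γ j - 1))) := by
  obtain ⟨c, hc, hA⟩ := coercive hpos
  have hI := int3 hc hA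
  set p : Fin 3 → ℝ[X] := fun d => hpoly s (γ d) with hp
  have hdp : ∀ j, ∫ x : Fin 3 → ℝ, Real.exp (-(1 / 2) * (x ⬝ᵥ Λ⁻¹.mulVec x)) *
        ∏ d, (dp p j d).eval (x d) =
        (γ j : ℝ) * s⁻¹ * Jint Λ s (Function.update γ j (γ j - 1)) := by
    intro j
    rw [Jint, ← integral_const_mul]
    congr 1
    ext x
    fin_cases j <;> simp [Fin.prod_univ_three, dp, hp, Function.update, deriv_hpoly] <;> ring
  have h1 : ∀ x : Fin 3 → ℝ, Real.exp (-(1 / 2) * (x ⬝ᵥ Λ⁻¹.mulVec x)) *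
      ∏ d, (hpoly s (Function.update γ i (γ i + 1) d)).eval (x d) =
      s⁻¹ * (Real.exp (-(1 / 2) * (x ⬝ᵥ Λ⁻¹.mulVec x)) *
        ∏ d, (Function.update p i (X * p i) d).eval (x d)) -
      s * (Real.exp (-(1 / 2) * (x ⬝ᵥ Λ⁻¹.mulVec x)) * ∏ d, (dp p i d).eval (x d)) := by
    intro x
    fin_cases i <;>
      simp [Fin.prod_univ_three, dp, hp, Function.update, hpoly_succ hs.ne'] <;> ring
  have h2 : Jint Λ s (Function.update γ i (γ i + 1)) = s⁻¹ *
      ∑ j, Λ i j * ((γ j : ℝ) * s⁻¹ * Jint Λ s (Function.update γ j (γ j - 1))) -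
      s * ((γ i : ℝ) * s⁻¹ * Jint Λ s (Function.update γ i (γ i - 1))) := by
    rw [Jint]
    simp_rw [h1]
    rw [integral_sub ((hI _).const_mul _) ((hI _).const_mul _), integral_const_mul,
      integral_const_mul, ibp hsymm hpos, hdp]
    simp_rw [hdp]
  rw [h2]
  simp_rw [sub_mul]
  rw [Finset.sum_sub_distrib]
  simp only [mul_ite, mul_one, mul_zero, ite_mul, zero_mul, Finset.sum_ite_eq, Finset.mem_univ,
    if_true]
  rw [Finset.mul_sum]
  subst hθ
  congr 1
  · refine Finset.sum_congr rfl fun j _ => ?_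
    field_simp
  · field_simp

lemma gcoef_nat (m ρ θ : ℝ) (u : Fin 3 → ℝ) (Λ : Matrix (Fin 3) (Fin 3) ℝ) (β : Fin 3 → ℕ) :
    gcoef m ρ θ u Λ (fun d => (β d : ℤ)) =
      m * θ ^ (((∑ d, β d : ℕ) : ℝ) / 2) / ((∏ d, Nat.factorial (β d) : ℕ) : ℝ) *
      (ρ / (m * Real.sqrt (((2 * Real.pi) • Λ).det)) * Jint Λ (Real.sqrt θ) β) := by
  rw [gcoef, if_pos (fun d => Int.natCast_nonneg _)]
  have : ∫ ξ : Fin 3 → ℝ,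
        esGauss m ρ u Λ ξ * ∏ d, He (((β d : ℤ)).toNat) ((ξ d - u d) / Real.sqrt θ) =
      ρ / (m * Real.sqrt (((2 * Real.pi) • Λ).det)) * Jint Λ (Real.sqrt θ) β := by
    rw [Jint, ← integral_const_mul,
      ← integral_sub_right_eq_self (fun x : Fin 3 → ℝ => _ * (_ * _)) u]
    congr 1
    ext ξ
    simp only [esGauss, He_hpoly, Int.toNat_natCast]
    rw [mul_assoc]
    rfl
  rw [this]
  simp

lemma fact_upd (γ : Fin 3 → ℕ) (i : Fin 3) :
    ∏ d, Nat.factorial (Function.update γ i (γ i + 1) d) =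
      (γ i + 1) * ∏ d, Nat.factorial (γ d) := by
  fin_cases i <;> simp [Fin.prod_univ_three, Function.update, Nat.factorial_succ] <;> ring

lemma sum_upd (γ : Fin 3 → ℕ) (i : Fin 3) :
    ∑ d, Function.update γ i (γ i + 1) d = ∑ d, γ d + 1 := by
  fin_cases i <;> simp [Fin.sum_univ_three, Function.update] <;> ring

lemma main_rec (m ρ θ : ℝ) (hθ : 0 < θ)
    (u : Fin 3 → ℝ) (Λ : Matrix (Fin 3) (Fin 3) ℝ)
    (hsymm : Λ.IsSymm) (hpos : Λ.PosDef) (α : Fin 3 → ℕ) (i : Fin 3) (hi : 1 ≤ α i) :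
    (α i : ℝ) * gcoef m ρ θ u Λ (fun d => (α d : ℤ)) =
          ∑ j, (Λ i j - θ * if i = j then (1 : ℝ) else 0) *
            gcoef m ρ θ u Λ
              (fun d => (α d : ℤ) - (if d = i then 1 else 0) -
                (if d = j then 1 else 0)) := by
  obtain ⟨γ, rfl⟩ : ∃ γ : Fin 3 → ℕ, α = Function.update γ i (γ i + 1) :=
    ⟨Function.update α i (α i - 1), by simp [Nat.sub_add_cancel hi]⟩
  rw [gcoef_nat, Jrec hsymm hpos (Real.sqrt_pos.2 hθ) (Real.sq_sqrt hθ.le)]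
  simp only [Finset.mul_sum]
  refine Finset.sum_congr rfl fun j _ => ?_
  have hβ : (fun d => ((Function.update γ i (γ i + 1) d : ℕ) : ℤ) - (if d = i then 1 else 0) -
                (if d = j then 1 else 0)) = fun d => (γ d : ℤ) - (if d = j then 1 else 0) := by
    ext d
    by_cases h : d = i
    · subst h; simp
    · simp [h]
  rw [hβ]
  rcases Nat.eq_zero_or_pos (γ j) with h0 | h0
  · have hz : gcoef m ρ θ u Λ (fun d => (γ d : ℤ) - (if d = j then 1 else 0)) = 0 := by
      rw [gcoef, if_neg]
      intro h
      have := h j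
      simp [h0] at this
    rw [hz, h0]
    simp
  · obtain ⟨δ, rfl⟩ : ∃ δ : Fin 3 → ℕ, γ = Function.update δ j (δ j + 1) :=
      ⟨Function.update γ j (γ j - 1), by simp [Nat.sub_add_cancel h0]⟩
    have hδ : (fun d => ((Function.update δ j (δ j + 1) d : ℕ) : ℤ) - (if d = j then 1 else 0))
        = fun d => (δ d : ℤ) := by
      ext d
      by_cases h : d = j
      · subst h; simp
      · simp [h]
    rw [hδ, gcoef_nat, fact_upd, fact_upd, sum_upd, sum_upd]
    have e : Function.update (Function.update δ j (δ j + 1)) j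
        (Function.update δ j (δ j + 1) j - 1) = δ := by simp
    rw [e, Function.update_self, Function.update_self]
    have hpw : θ ^ (((∑ d, δ d + 1 + 1 : ℕ) : ℝ) / 2) = θ ^ (((∑ d, δ d : ℕ) : ℝ) / 2) * θ := by
      rw [← Real.rpow_add_one hθ.ne']
      congr 1
      push_cast
      ring
    rw [hpw]
    have hF : ((∏ d, Nat.factorial (δ d) : ℕ) : ℝ) ≠ 0 := by
      exact_mod_cast Finset.prod_ne_zero_iff.2 fun d _ => Nat.factorial_ne_zero _
    generalize ((∏ d, Nat.factorial (δ d) : ℕ)) = F at *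
    generalize (Function.update δ j (δ j + 1) i) = a
    generalize ρ / (m * Real.sqrt (((2 * Real.pi) • Λ).det)) = K
    push_cast
    have ha : (a : ℝ) + 1 ≠ 0 := by positivity
    have hd : (δ j : ℝ) + 1 ≠ 0 := by positivity
    field_simp

end aux

theorem stmt_17 (m ρ θ : ℝ) (hm : 0 < m) (hρ : 0 < ρ) (hθ : 0 < θ)
    (u : Fin 3 → ℝ) (Λ : Matrix (Fin 3) (Fin 3) ℝ)
    (hsymm : Λ.IsSymm) (hpos : Λ.PosDef) :
    gcoef m ρ θ u Λ (fun _ => 0) = ρ ∧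
      (∀ α : Fin 3 → ℕ, ∑ d, α d = 1 →
        gcoef m ρ θ u Λ (fun d => (α d : ℤ)) = 0) ∧
      ∀ α : Fin 3 → ℕ, 2 ≤ ∑ d, α d → ∀ i : Fin 3, 1 ≤ α i →
        (α i : ℝ) * gcoef m ρ θ u Λ (fun d => (α d : ℤ)) =
          ∑ j, (Λ i j - θ * if i = j then (1 : ℝ) else 0) *
            gcoef m ρ θ u Λ
              (fun d => (α d : ℤ) - (if d = i then 1 else 0) -
                (if d = j then 1 else 0)) := by
  refine ⟨?_, ?_, fun α _ i hi => main_rec m ρ θ hθ u Λ hsymm hpos α i hi⟩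
  · have h := gcoef_nat m ρ θ u Λ (fun _ => 0)
    have hd : 0 < Real.sqrt (((2 * Real.pi) • Λ).det) := by
      apply Real.sqrt_pos.2
      rw [Matrix.det_smul]
      have := hpos.det_pos
      positivity
    have hJ : Jint Λ (Real.sqrt θ) (fun _ => 0) = Real.sqrt (((2 * Real.pi) • Λ).det) := by
      rw [← norm_int hpos, Jint]
      simp [hpoly]
    rw [hJ] at h
    simp only [Nat.cast_zero] at h
    rw [h]
    generalize Real.sqrt (((2 * Real.pi) • Λ).det) = D at *
    simp
    field_simp
  · intro α hα
    obtain ⟨i, hi⟩ : ∃ i, 1 ≤ α i := by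
      by_contra! hc
      have : ∑ d, α d = 0 := Finset.sum_eq_zero fun d _ => by have := hc d; omega
      omega
    have h := main_rec m ρ θ hθ u Λ hsymm hpos α i hi
    have hz : ∀ j, gcoef m ρ θ u Λ (fun d => (α d : ℤ) - (if d = i then 1 else 0) -
                (if d = j then 1 else 0)) = 0 := by
      intro j
      rw [gcoef, if_neg]
      intro hc
      have h0 := Finset.sum_nonneg fun d (_ : d ∈ Finset.univ) => hc d
      rw [Finset.sum_sub_distrib, Finset.sum_sub_distrib, ← Nat.cast_sum, hα] at h0
      simp at h0
    simp only [hz, mul_zero, Finset.sum_const_zero] at h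
    rcases mul_eq_zero.1 h with h | h
    · have : α i = 0 := by exact_mod_cast h
      omega
    · exact h
end
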